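/- For a compact set K ⊆ M(X) let G(K) = {x ∈ X : V(x) ⊆ K}. Then the set O of observable measures satisfies O = ⋂{K ⊆ M(X) : K weak*-compact and Leb(G(K)) = 1}; that is, O is the smallest weak*-compact subset of M(X) containing, for Leb-a.e. x, all weak* limit points of the empirical measures of x. In particular O is nonempty, weak*-compact, contained in M(X,T), and Leb(G(O)) = 1. -/

import Mathlib

open MeasureTheory Filter Topology
open scoped ENNReal

/-- The empirical probability measure `γ_{n+1,x} = (1/(n+1)) ∑_{j≤n} δ_{T^j x}` of the orbit
of `x` (indexed so that it is a probability measure for every index). -/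
noncomputable def empiricalPM {X : Type*} [MeasurableSpace X] (T : X → X) (x : X) (n : ℕ) :
    MeasureTheory.ProbabilityMeasure X :=
  ⟨(n + 1 : ℝ≥0∞)⁻¹ • ∑ j ∈ Finset.range (n + 1), MeasureTheory.Measure.dirac (T^[j] x), by
    constructor
    rw [Measure.smul_apply, Measure.finset_sum_apply]
    simp
    rw [ENNReal.inv_mul_cancel] <;> simp⟩

/-- The set `V(x)` of weak* limit points of the sequence of empirical measures of `x`. -/
def limitSet {X : Type*} [MeasurableSpace X] [TopologicalSpace X] [OpensMeasurableSpace X]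
    (T : X → X) (x : X) : Set (MeasureTheory.ProbabilityMeasure X) :=
  {μ | ∃ φ : ℕ → ℕ, StrictMono φ ∧ Tendsto (fun j => empiricalPM T x (φ j)) atTop (𝓝 μ)}

/-- `μ` is an observable (physical-like) measure for `(X, T, Leb)`: every weak* neighbourhood
`U` of `μ` (equivalently, every ε-ball around `μ` in a compatible metric) is intersected by
`V(x)` for a positive `Leb`-measure set of points `x`. -/
def IsObservable {X : Type*} [MeasurableSpace X] [TopologicalSpace X] [OpensMeasurableSpace X]
    (Leb : MeasureTheory.Measure X) (T : X → X) (μ : MeasureTheory.ProbabilityMeasure X) : Prop :=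
  ∀ U : Set (MeasureTheory.ProbabilityMeasure X), IsOpen U → μ ∈ U →
    0 < Leb {x | (limitSet T x ∩ U).Nonempty}

/-- The Lyapunov exponent `χ(μ, Φ) = lim_n (1/n) ∫ log φ_n dμ` of a potential
`Φ = {log φ_n}` (for invariant `μ` the limit exists by subadditivity, so it equals the
`liminf` used here); it takes values in `[-∞, ∞)`, i.e. in `EReal`. -/
noncomputable def lyapExp {X : Type*} [MeasurableSpace X] (φ : ℕ → X → ℝ)
    (μ : MeasureTheory.Measure X) : EReal :=
  liminf (fun n : ℕ => (((n : ℝ)⁻¹ * ∫ x, Real.log (φ n x) ∂μ : ℝ) : EReal)) atTop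

/-!
The observable measures form the topological support of the outer measure
`A ↦ Leb {x | V(x) ∩ A ≠ ∅}` on the space of probability measures. As that space is second
countable, the support is the smallest closed set whose complement is null, and the complement of
`K` is null precisely when `V(x) ⊆ K` for almost every `x`. Since the sets `{x | V(x) ⊆ K}` are
measurable for closed `K`, this is the same as having full measure. Finally, the invariant measures
form a closed set which contains every `V(x)`, hence also the support.
-/

open Set TopologicalSpace

section OuterSupport

variable {Y : Type*} [TopologicalSpace Y]

/-- The topological support of an outer measure `m`: the points all of whose open neighbourhoods
have positive outer measure. -/
def outerSupport (m : OuterMeasure Y) : Set Y :=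
  {y | ∀ U, IsOpen U → y ∈ U → 0 < m U}

lemma notMem_outerSupport_iff {m : OuterMeasure Y} {y : Y} :
    y ∉ outerSupport m ↔ ∃ U, IsOpen U ∧ y ∈ U ∧ m U = 0 := by
  simp [outerSupport]

lemma isClosed_outerSupport (m : OuterMeasure Y) : IsClosed (outerSupport m) := by
  rw [← isOpen_compl_iff, isOpen_iff_forall_mem_open]
  intro y hy
  obtain ⟨U, hU, hyU, hmU⟩ := notMem_outerSupport_iff.mp hy
  exact ⟨U, fun z hz => notMem_outerSupport_iff.mpr ⟨U, hU, hz, hmU⟩, hU, hyU⟩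

lemma outerSupport_compl_null [SecondCountableTopology Y] (m : OuterMeasure Y) :
    m (outerSupport m)ᶜ = 0 := by
  refine measure_null_of_locally_null _ fun y hy => ?_
  obtain ⟨U, hU, hyU, hmU⟩ := notMem_outerSupport_iff.mp hy
  exact ⟨U, mem_nhdsWithin_of_mem_nhds (hU.mem_nhds hyU), hmU⟩

lemma outerSupport_subset_of_isClosed {m : OuterMeasure Y} {K : Set Y} (hK : IsClosed K)
    (hm : m Kᶜ = 0) : outerSupport m ⊆ K := by
  intro y hy
  by_contra hyK
  exact (hy Kᶜ hK.isOpen_compl hyK).ne' hm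

end OuterSupport

section HittingOuterMeasure

variable {α Y : Type*} [MeasurableSpace α]

/-- The hitting outer measure of a set-valued map `V`: the size of `A` is the outer `μ`-measure of
the set of parameters `x` for which `V x` meets `A`. -/
def hittingOuterMeasure (μ : Measure α) (V : α → Set Y) : OuterMeasure Y where
  measureOf A := μ {x | (V x ∩ A).Nonempty}
  empty := by simp
  mono hAB := measure_mono fun _ hx => hx.mono (inter_subset_inter_right _ hAB)
  iUnion_nat A _ := by
    simpa only [inter_iUnion, nonempty_iUnion, ofPred_exists] using measure_iUnion_le _

lemma hittingOuterMeasure_compl_eq_zero_iff {μ : Measure α} {V : α → Set Y} {K : Set Y} :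
    hittingOuterMeasure μ V Kᶜ = 0 ↔ ∀ᵐ x ∂μ, V x ⊆ K := by
  simp only [ae_iff, ← inter_compl_nonempty_iff]
  rfl

end HittingOuterMeasure

section MapClusterPt

variable {Y : Type*} [TopologicalSpace Y] [CompactSpace Y] [RegularSpace Y] {U : Set Y}

lemma exists_mem_mapClusterPt_iff_frequently_mem_basis {ι : Type*} {l : Filter ι} {u : ι → Y}
    {b : Set (Set Y)} (hb : IsTopologicalBasis b) (hU : IsOpen U) :
    (∃ y ∈ U, MapClusterPt y l u) ↔ ∃ B ∈ {B ∈ b | closure B ⊆ U}, ∃ᶠ i in l, u i ∈ B := by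
  constructor
  · rintro ⟨y, hyU, hy⟩
    obtain ⟨B, hB, hyB, hBU⟩ := hb.exists_closure_subset (hU.mem_nhds hyU)
    exact ⟨B, ⟨hB, hBU⟩, hy.frequently ((hb.isOpen hB).mem_nhds hyB)⟩
  · rintro ⟨B, ⟨-, hBU⟩, hB⟩
    obtain ⟨y, hyB, hy⟩ := isClosed_closure.isCompact.exists_mapClusterPt_of_frequently
      (hB.mono fun _ hi => subset_closure hi)
    exact ⟨y, hBU hyB, hy⟩

-- `borel Y` is explicit because `ProbabilityMeasure` already carries the Giry `σ`-algebra, for which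
-- Mathlib has no `BorelSpace` instance.
lemma measurableSet_setOf_exists_mem_mapClusterPt {α : Type*} [MeasurableSpace α]
    [SecondCountableTopology Y] {u : ℕ → α → Y} (hu : ∀ n, Measurable[_, borel Y] (u n))
    (hU : IsOpen U) : MeasurableSet {x | ∃ y ∈ U, MapClusterPt y atTop (u · x)} := by
  obtain ⟨b, hb_countable, -, hb⟩ := exists_countable_basis Y
  have hset : {x | ∃ y ∈ U, MapClusterPt y atTop (u · x)} =
      ⋃ B ∈ {B ∈ b | closure B ⊆ U}, limsup (fun n => u n ⁻¹' B) atTop := by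
    ext x
    simp only [mem_iUnion, exists_prop, mem_limsup_iff_frequently_mem]
    exact exists_mem_mapClusterPt_iff_frequently_mem_basis hb hU
  rw [hset]
  exact .biUnion (hb_countable.mono (sep_subset _ _)) fun B hB =>
    .measurableSet_limsup fun n =>
      hu n (MeasurableSpace.measurableSet_generateFrom (hb.isOpen hB.1))

end MapClusterPt

lemma secondCountableTopology_of_compactSpace_of_pseudoMetrizableSpace (Y : Type*)
    [TopologicalSpace Y] [CompactSpace Y] [PseudoMetrizableSpace Y] :
    SecondCountableTopology Y := by
  let := pseudoMetrizableSpacePseudoMetric Y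
  infer_instance

lemma birkhoffAverage_comp_self {R α M : Type*} [DivisionSemiring R] [AddCommMonoid M] [Module R M]
    (f : α → α) (g : α → M) (n : ℕ) (x : α) :
    birkhoffAverage R f (g ∘ f) n x = birkhoffAverage R f g n (f x) := by
  simp only [birkhoffAverage, birkhoffSum, Function.comp_apply, ← Function.iterate_succ_apply,
    ← Function.iterate_succ_apply']

section EmpiricalMeasure

variable {X : Type*} [MeasurableSpace X] {T : X → X}

section Integral

variable {E : Type*} [NormedAddCommGroup E] [NormedSpace ℝ E] [CompleteSpace E] {f : X → E}

lemma integral_empiricalPM (T : X → X) (x : X) (n : ℕ) (hf : StronglyMeasurable f) :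
    ∫ y, f y ∂(empiricalPM T x n : Measure X) = birkhoffAverage ℝ T f (n + 1) x := by
  have hdef : (empiricalPM T x n : Measure X) =
      (n + 1 : ℝ≥0∞)⁻¹ • ∑ j ∈ Finset.range (n + 1), Measure.dirac (T^[j] x) := rfl
  have hweight : ((n + 1 : ℝ≥0∞)⁻¹).toReal = ((n + 1 : ℕ) : ℝ)⁻¹ := by
    rw [ENNReal.toReal_inv]
    norm_cast
  rw [hdef, integral_smul_measure,
    integral_finsetSum_measure fun _ _ => integrable_dirac' hf enorm_lt_top, hweight]
  simp only [integral_dirac' _ _ hf, birkhoffAverage, birkhoffSum]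

lemma tendsto_integral_comp_sub_integral_empiricalPM (hT : Measurable T) (x : X)
    (hf : StronglyMeasurable f) (hbdd : Bornology.IsBounded (range f)) :
    Tendsto (fun n => ∫ y, f (T y) ∂(empiricalPM T x n : Measure X) -
      ∫ y, f y ∂(empiricalPM T x n : Measure X)) atTop (𝓝 0) := by
  have h := (tendsto_birkhoffAverage_apply_sub_birkhoffAverage' ℝ hbdd T x).comp
    (tendsto_add_atTop_nat 1)
  refine h.congr fun n => ?_
  have hcomp := integral_empiricalPM T x n (hf.comp_measurable hT)
  rw [birkhoffAverage_comp_self] at hcomp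
  exact (congr_arg₂ (· - ·) hcomp (integral_empiricalPM T x n hf)).symm

end Integral

variable [TopologicalSpace X]

lemma continuous_empiricalPM [OpensMeasurableSpace X] (hT : Continuous T) (n : ℕ) :
    Continuous (empiricalPM T · n) := by
  rw [ProbabilityMeasure.continuous_iff_forall_continuous_integral]
  intro f
  simp only [integral_empiricalPM T _ n f.continuous.measurable.stronglyMeasurable, birkhoffAverage,
    birkhoffSum]
  exact (continuous_finsetSum _ fun j _ => f.continuous.comp (hT.iterate j)).const_smul
    ((n + 1 : ℕ) : ℝ)⁻¹

lemma map_eq_of_mem_limitSet [HasOuterApproxClosed X] [BorelSpace X] (hT : Continuous T) {x : X}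
    {μ : ProbabilityMeasure X} (hμ : μ ∈ limitSet T x) : (μ : Measure X).map T = μ := by
  obtain ⟨φ, hφ, hlim⟩ := hμ
  have : IsProbabilityMeasure ((μ : Measure X).map T) :=
    Measure.isProbabilityMeasure_map hT.measurable.aemeasurable
  refine ext_of_forall_integral_eq_of_IsFiniteMeasure fun f => ?_
  rw [integral_map hT.measurable.aemeasurable f.continuous.aestronglyMeasurable, ← sub_eq_zero]
  rw [ProbabilityMeasure.tendsto_iff_forall_integral_tendsto] at hlim
  have hdefect := tendsto_integral_comp_sub_integral_empiricalPM hT.measurable x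
    f.continuous.measurable.stronglyMeasurable f.isBounded_range
  exact tendsto_nhds_unique ((hlim (f.compContinuous ⟨T, hT⟩)).sub (hlim f))
    (hdefect.comp hφ.tendsto_atTop)

lemma isClosed_setOf_map_eq_self [HasOuterApproxClosed X] [BorelSpace X] (hT : Continuous T) :
    IsClosed {μ : ProbabilityMeasure X | (μ : Measure X).map T = μ} := by
  have hset : {μ : ProbabilityMeasure X | (μ : Measure X).map T = μ} =
      {μ | μ.map hT.measurable.aemeasurable = μ} := by
    ext μ
    simp [← ProbabilityMeasure.toMeasure_injective.eq_iff]
  rw [hset]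
  exact isClosed_eq (ProbabilityMeasure.continuous_map hT) continuous_id

lemma mem_limitSet_iff_mapClusterPt [OpensMeasurableSpace X]
    [FirstCountableTopology (ProbabilityMeasure X)] {x : X} {μ : ProbabilityMeasure X} :
    μ ∈ limitSet T x ↔ MapClusterPt μ atTop (empiricalPM T x) :=
  ⟨fun ⟨_, hφ, h⟩ => .of_comp hφ.tendsto_atTop h.mapClusterPt, fun h => h.tendsto_subseq⟩

lemma setOf_isObservable_eq_outerSupport [OpensMeasurableSpace X] (Leb : Measure X) (T : X → X) :
    {μ | IsObservable Leb T μ} = outerSupport (hittingOuterMeasure Leb (limitSet T)) :=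
  rfl

end EmpiricalMeasure

section CompactMetrizable

variable {X : Type*} [TopologicalSpace X] [CompactSpace X] [MetrizableSpace X] [MeasurableSpace X]
  [BorelSpace X] {T : X → X}

instance secondCountableTopology_probabilityMeasure :
    SecondCountableTopology (ProbabilityMeasure X) :=
  have := secondCountableTopology_of_compactSpace_of_pseudoMetrizableSpace X
  secondCountableTopology_of_compactSpace_of_pseudoMetrizableSpace _

lemma limitSet_nonempty (T : X → X) (x : X) : (limitSet T x).Nonempty := by
  obtain ⟨μ, -, hμ⟩ := isCompact_univ.exists_mapClusterPt (f := atTop) (u := empiricalPM T x)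
    (by simp)
  exact ⟨μ, mem_limitSet_iff_mapClusterPt.mpr hμ⟩

lemma measurableSet_setOf_limitSet_subset (hT : Continuous T) {K : Set (ProbabilityMeasure X)}
    (hK : IsClosed K) : MeasurableSet {x | limitSet T x ⊆ K} := by
  have hmeas := measurableSet_setOf_exists_mem_mapClusterPt
    (fun n => (continuous_empiricalPM hT n).borel_measurable.mono
      OpensMeasurableSpace.borel_le le_rfl) hK.isOpen_compl
  convert! hmeas.compl using 1
  ext x
  simp [subset_def, mem_limitSet_iff_mapClusterPt, not_imp_not]

lemma ae_limitSet_subset_iff (hT : Continuous T) (Leb : Measure X) [IsProbabilityMeasure Leb]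
    {K : Set (ProbabilityMeasure X)} (hK : IsClosed K) :
    (∀ᵐ x ∂Leb, limitSet T x ⊆ K) ↔ Leb {x | limitSet T x ⊆ K} = 1 :=
  mem_ae_iff_prob_eq_one (measurableSet_setOf_limitSet_subset hT hK)

theorem observable_eq_sInter_compact_full_basin_general (hT : Continuous T) (Leb : Measure X)
    [IsProbabilityMeasure Leb] :
    {μ : ProbabilityMeasure X | IsObservable Leb T μ} =
        ⋂₀ {K : Set (ProbabilityMeasure X) |
          IsCompact K ∧ Leb {x | limitSet T x ⊆ K} = 1} ∧
      {μ : ProbabilityMeasure X | IsObservable Leb T μ}.Nonempty ∧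
      IsCompact {μ : ProbabilityMeasure X | IsObservable Leb T μ} ∧
      {μ : ProbabilityMeasure X | IsObservable Leb T μ} ⊆
        {μ : ProbabilityMeasure X | (μ : Measure X).map T = (μ : Measure X)} ∧
      Leb {x | limitSet T x ⊆ {μ : ProbabilityMeasure X | IsObservable Leb T μ}} = 1 := by
  rw [setOf_isObservable_eq_outerSupport]
  set m := hittingOuterMeasure Leb (limitSet T)
  have hclosed : IsClosed (outerSupport m) := isClosed_outerSupport m
  have hae : ∀ᵐ x ∂Leb, limitSet T x ⊆ outerSupport m :=
    hittingOuterMeasure_compl_eq_zero_iff.mp (outerSupport_compl_null m)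
  have hfull := (ae_limitSet_subset_iff hT Leb hclosed).mp hae
  have hminimal {K : Set (ProbabilityMeasure X)} (hK : IsClosed K)
      (h : ∀ᵐ x ∂Leb, limitSet T x ⊆ K) : outerSupport m ⊆ K :=
    outerSupport_subset_of_isClosed hK (hittingOuterMeasure_compl_eq_zero_iff.mpr h)
  refine ⟨Subset.antisymm ?_ (sInter_subset_of_mem ⟨hclosed.isCompact, hfull⟩), ?_,
    hclosed.isCompact, ?_, hfull⟩
  · exact subset_sInter fun K ⟨hK, hK_full⟩ =>
      hminimal hK.isClosed ((ae_limitSet_subset_iff hT Leb hK.isClosed).mpr hK_full)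
  · obtain ⟨x, hx⟩ := hae.exists
    exact (limitSet_nonempty T x).mono hx
  · exact hminimal (isClosed_setOf_map_eq_self hT)
      (.of_forall fun _ _ hμ => map_eq_of_mem_limitSet hT hμ)

end CompactMetrizable

/-- **Theorem 2.2 ([CE11, Theorem 1.5]).** The set `O` of observable measures is the smallest
weak*-compact subset of `M(X)` containing, for `Leb`-a.e. `x`, all weak* limit points of the
empirical measures of `x`: with `G(K) = {x : V(x) ⊆ K}` one has
`O = ⋂ {K : K compact, Leb(G(K)) = 1}`. In particular `O` is nonempty, weak*-compact,
contained in `M(X,T)`, and `Leb(G(O)) = 1`. -/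
theorem observable_eq_sInter_compact_full_basin
    {X : Type*} [MetricSpace X] [CompactSpace X] [MeasurableSpace X] [BorelSpace X]
    (T : X → X) (hT : IsHomeomorph T)
    (Leb : MeasureTheory.Measure X) [IsProbabilityMeasure Leb] :
    {μ : ProbabilityMeasure X | IsObservable Leb T μ} =
        ⋂₀ {K : Set (ProbabilityMeasure X) |
          IsCompact K ∧ Leb {x | limitSet T x ⊆ K} = 1} ∧
      {μ : ProbabilityMeasure X | IsObservable Leb T μ}.Nonempty ∧
      IsCompact {μ : ProbabilityMeasure X | IsObservable Leb T μ} ∧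
      {μ : ProbabilityMeasure X | IsObservable Leb T μ} ⊆
        {μ : ProbabilityMeasure X | (μ : Measure X).map T = (μ : Measure X)} ∧
      Leb {x | limitSet T x ⊆ {μ : ProbabilityMeasure X | IsObservable Leb T μ}} = 1 :=
  observable_eq_sInter_compact_full_basin_general hT.continuous Leb
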